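/- Let a, b, i, t be nonnegative integers with a ≥ b ≥ i ≥ t, and let μ = (a+i, b−i). Then π_μ∘δ_i∘Φ_t = c_t(a,b,i)·(π_μ∘δ_i) as linear maps Λ^a⊗Λ^b → L_μ, where c_t(a,b,i) = C(i,t)·C(a−b+t+i,t). Moreover, if n ≥ a+b, then the map π_μ∘δ_i : Λ^a⊗Λ^b → L_μ is nonzero. -/

import Mathlib

open TensorProduct

set_option synthInstance.maxHeartbeats 1000000
set_option maxSynthPendingDepth 3
set_option maxHeartbeats 1000000

noncomputable section

namespace MMS

variable (K : Type) [Field K] [CharZero K] (n : ℕ)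

/-- `V = K^n`, the natural module of `G = GL(n,K)`. -/
abbrev V : Type := Fin n → K

/-- `Λ^p`, the `p`-th exterior power of `V`. -/
abbrev Lam (p : ℕ) : Type := ⋀[K]^p (V K n)

/-- The wedge `v_1 ∧ ⋯ ∧ v_p ∈ Λ^p`. -/
def wedge {p : ℕ} (v : Fin p → V K n) : Lam K n p :=
  ⟨ExteriorAlgebra.ιMulti K p v, ExteriorAlgebra.ιMulti_range K p (Set.mem_range_self v)⟩

/-- Transport along an equality of degrees. -/
def ecast {p q : ℕ} (h : p = q) : Lam K n p ≃ₗ[K] Lam K n q :=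
  h ▸ LinearEquiv.refl K (Lam K n p)

/-- `m` is the wedge multiplication map `Λ^p ⊗ Λ^q → Λ^{p+q}`. -/
def IsMulMap (p q : ℕ) (m : Lam K n p ⊗[K] Lam K n q →ₗ[K] Lam K n (p+q)) : Prop :=
  ∀ (v : Fin p → V K n) (w : Fin q → V K n),
    m (wedge K n v ⊗ₜ[K] wedge K n w) = wedge K n (Fin.append v w)

/-- The set of `(p,q)`-shuffles: permutations `σ` of `{1, …, p+q}` which are strictly
increasing on the first `p` and on the last `q` indices. -/
def shuffles (p q : ℕ) : Finset (Equiv.Perm (Fin (p+q))) :=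
  Finset.univ.filter (fun σ =>
    (∀ i j : Fin (p+q), i < j → (j : ℕ) < p → σ i < σ j) ∧
    (∀ i j : Fin (p+q), i < j → p ≤ (i : ℕ) → σ i < σ j))

/-- `D` is the component `Δ_{p,q} : Λ^{p+q} → Λ^p ⊗ Λ^q` of the comultiplication, i.e.
`Δ_{p,q}(v_1 ∧ ⋯ ∧ v_{p+q}) = Σ_σ sgn(σ) (v_{σ(1)} ∧ ⋯ ∧ v_{σ(p)}) ⊗ (v_{σ(p+1)} ∧ ⋯ ∧ v_{σ(p+q)})`,
the sum being over all `(p,q)`-shuffles. -/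
def IsComulMap (p q : ℕ) (D : Lam K n (p+q) →ₗ[K] Lam K n p ⊗[K] Lam K n q) : Prop :=
  ∀ v : Fin (p+q) → V K n,
    D (wedge K n v) =
      ∑ σ ∈ shuffles p q,
        (Equiv.Perm.sign σ : ℤ) •
          (wedge K n (fun i => v (σ (Fin.castAdd q i))) ⊗ₜ[K]
            wedge K n (fun i => v (σ (Fin.natAdd p i))))

variable (mf : ∀ p q : ℕ, Lam K n p ⊗[K] Lam K n q →ₗ[K] Lam K n (p+q))
variable (Df : ∀ p q : ℕ, Lam K n (p+q) →ₗ[K] Lam K n p ⊗[K] Lam K n q)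

/-- The map `δ_t = (m ⊗ 1) ∘ (1 ⊗ Δ_{t,b-t}) : Λ^a ⊗ Λ^b → Λ^{a+t} ⊗ Λ^{b-t}`. -/
def deltaMap (a b t : ℕ) (ht : t ≤ b) :
    Lam K n a ⊗[K] Lam K n b →ₗ[K] Lam K n (a+t) ⊗[K] Lam K n (b-t) :=
  (TensorProduct.map (mf a t) LinearMap.id)
    ∘ₗ (TensorProduct.assoc K (Lam K n a) (Lam K n t) (Lam K n (b-t))).symm.toLinearMap
    ∘ₗ (TensorProduct.map LinearMap.id
        ((Df t (b-t)) ∘ₗ (ecast K n (by omega : b = t + (b-t))).toLinearMap))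

/-- The map `θ_t = (1 ⊗ m) ∘ (Δ_{a-t,t} ⊗ 1) : Λ^a ⊗ Λ^b → Λ^{a-t} ⊗ Λ^{b+t}`. -/
def thetaMap (a b t : ℕ) (ht : t ≤ a) :
    Lam K n a ⊗[K] Lam K n b →ₗ[K] Lam K n (a-t) ⊗[K] Lam K n (b+t) :=
  (TensorProduct.map LinearMap.id
      ((ecast K n (by omega : t + b = b + t)).toLinearMap ∘ₗ mf t b))
    ∘ₗ (TensorProduct.assoc K (Lam K n (a-t)) (Lam K n t) (Lam K n b)).toLinearMap
    ∘ₗ (TensorProduct.map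
        ((Df (a-t) t) ∘ₗ (ecast K n (by omega : a = (a-t) + t)).toLinearMap) LinearMap.id)

/-- The map `Φ_t = θ_t ∘ δ_t : Λ^a ⊗ Λ^b → Λ^a ⊗ Λ^b`. -/
def PhiMap (a b t : ℕ) (hta : t ≤ a) (htb : t ≤ b) :
    Lam K n a ⊗[K] Lam K n b →ₗ[K] Lam K n a ⊗[K] Lam K n b :=
  (TensorProduct.congr (ecast K n (by omega : a + t - t = a))
      (ecast K n (by omega : b - t + t = b))).toLinearMap
    ∘ₗ thetaMap K n mf Df (a+t) (b-t) t (by omega)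
    ∘ₗ deltaMap K n mf Df a b t htb

/-- The map `Φ_t`, extended by `0` to all `t`. -/
def PhiMap' (a b t : ℕ) :
    Lam K n a ⊗[K] Lam K n b →ₗ[K] Lam K n a ⊗[K] Lam K n b :=
  if h : t ≤ a ∧ t ≤ b then PhiMap K n mf Df a b t h.1 h.2 else 0

/-- The map `θ_1 : Λ^{a+1} ⊗ Λ^{b-1} → Λ^a ⊗ Λ^b` (for `b ≥ 1`). -/
def theta1 (a b : ℕ) (hb : 1 ≤ b) :
    Lam K n (a+1) ⊗[K] Lam K n (b-1) →ₗ[K] Lam K n a ⊗[K] Lam K n b :=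
  (TensorProduct.congr (ecast K n (by omega : a + 1 - 1 = a))
      (ecast K n (by omega : b - 1 + 1 = b))).toLinearMap
    ∘ₗ thetaMap K n mf Df (a+1) (b-1) 1 (by omega)

/-- The submodule of relations defining the Schur module `L_{(a,b)}`: the image of
`θ_1` if `b ≥ 1`, and `0` if `b = 0`. -/
def schurRel (a b : ℕ) : Submodule K (Lam K n a ⊗[K] Lam K n b) :=
  if hb : 1 ≤ b then LinearMap.range (theta1 K n mf Df a b hb) else ⊥

/-- The Schur module `L_{(a,b)}`, realized as the cokernel of `θ_1` (in characteristic zero). -/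
abbrev SchurL (a b : ℕ) : Type :=
  (Lam K n a ⊗[K] Lam K n b) ⧸ schurRel K n mf Df a b

/-- The projection `π_{(a,b)} : Λ^a ⊗ Λ^b → L_{(a,b)}`. -/
def schurProj (a b : ℕ) : Lam K n a ⊗[K] Lam K n b →ₗ[K] SchurL K n mf Df a b :=
  (schurRel K n mf Df a b).mkQ

/-- The coefficient `c_t(a,b,i) = C(i,t)·C(a-b+t+i,t)`. -/
def cCoef (a b t i : ℕ) : ℕ := (i.choose t) * ((a-b+t+i).choose t)

/-- The group `G = GL(n,K)`. -/
abbrev GLn : Type := Matrix.GeneralLinearGroup (Fin n) K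

/-- `rho` is the family of natural actions of `G = GL(n,K)` on the exterior powers `Λ^p`
of the natural module `V = K^n`. -/
def IsExtAction (rho : ∀ p : ℕ, GLn K n → (Lam K n p →ₗ[K] Lam K n p)) : Prop :=
  ∀ (p : ℕ) (g : GLn K n) (v : Fin p → V K n),
    rho p g (wedge K n v) =
      wedge K n (fun i => Matrix.toLin' (g : Matrix (Fin n) (Fin n) K) (v i))

/-- The action of `g ∈ GL(n,K)` on `Λ^a ⊗ Λ^b`. -/
def rhoT (rho : ∀ p : ℕ, GLn K n → (Lam K n p →ₗ[K] Lam K n p)) (a b : ℕ) (g : GLn K n) :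
    Lam K n a ⊗[K] Lam K n b →ₗ[K] Lam K n a ⊗[K] Lam K n b :=
  TensorProduct.map (rho a g) (rho b g)

/-- The quotients `M₁ ⧸ N₁` and `M₂ ⧸ N₂` are isomorphic as representations, with respect
to the given actions `ρ₁, ρ₂` on `M₁` and `M₂` (which descend to the quotients). -/
def IsQuotIso {G' : Type} {M₁ M₂ : Type} [AddCommGroup M₁] [Module K M₁]
    [AddCommGroup M₂] [Module K M₂]
    (N₁ : Submodule K M₁) (N₂ : Submodule K M₂)
    (ρ₁ : G' → M₁ →ₗ[K] M₁) (ρ₂ : G' → M₂ →ₗ[K] M₂) : Prop :=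
  ∃ e : (M₁ ⧸ N₁) ≃ₗ[K] (M₂ ⧸ N₂),
    ∀ (g : G') (x : M₁) (y : M₂),
      e (Submodule.Quotient.mk x) = Submodule.Quotient.mk y →
      e (Submodule.Quotient.mk (ρ₁ g x)) = Submodule.Quotient.mk (ρ₂ g y)

/-- The "multiply in pairs" map
`(Λ^{p₁} ⊗ Λ^{q₁}) ⊗ (Λ^{p₂} ⊗ Λ^{q₂}) → Λ^{p₁+p₂} ⊗ Λ^{q₁+q₂}`. -/
def pairMul (p₁ q₁ p₂ q₂ : ℕ) :
    (Lam K n p₁ ⊗[K] Lam K n q₁) ⊗[K] (Lam K n p₂ ⊗[K] Lam K n q₂) →ₗ[K]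
      Lam K n (p₁+p₂) ⊗[K] Lam K n (q₁+q₂) :=
  (TensorProduct.map (mf p₁ p₂) (mf q₁ q₂))
    ∘ₗ (TensorProduct.tensorTensorTensorComm K (Lam K n p₁) (Lam K n q₁)
        (Lam K n p₂) (Lam K n q₂)).toLinearMap

/-- The map `φ_k = (m ⊗ m) ∘ (1 ⊗ τ ⊗ 1) ∘ (Δ_{a-k,k} ⊗ Δ_{k,b-k}) : Λ^a ⊗ Λ^b → Λ^a ⊗ Λ^b`. -/
def phiSmall (a b k : ℕ) (hka : k ≤ a) (hkb : k ≤ b) :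
    Lam K n a ⊗[K] Lam K n b →ₗ[K] Lam K n a ⊗[K] Lam K n b :=
  (TensorProduct.congr (ecast K n (by omega : (a-k) + k = a))
      (ecast K n (by omega : k + (b-k) = b))).toLinearMap
    ∘ₗ pairMul K n mf (a-k) k k (b-k)
    ∘ₗ (TensorProduct.map
        ((Df (a-k) k) ∘ₗ (ecast K n (by omega : a = (a-k) + k)).toLinearMap)
        ((Df k (b-k)) ∘ₗ (ecast K n (by omega : b = k + (b-k))).toLinearMap))

/-- The map `ψ_k = C(b,k)·1 - φ_k : Λ^a ⊗ Λ^b → Λ^a ⊗ Λ^b`. -/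
def psiSmall (a b k : ℕ) (hka : k ≤ a) (hkb : k ≤ b) :
    Lam K n a ⊗[K] Lam K n b →ₗ[K] Lam K n a ⊗[K] Lam K n b :=
  (Nat.choose b k : K) • LinearMap.id - phiSmall K n mf Df a b k hka hkb

/-- The map `β_k = (m ⊗ m) ∘ (1 ⊗ τ ⊗ 1) ∘ (Δ_{a-k,k} ⊗ 1 ⊗ 1) : Λ^a ⊗ (Λ^k ⊗ Λ^{b-k}) → Λ^a ⊗ Λ^b`. -/
def betaMap (a b k : ℕ) (hka : k ≤ a) (hkb : k ≤ b) :
    Lam K n a ⊗[K] (Lam K n k ⊗[K] Lam K n (b-k)) →ₗ[K] Lam K n a ⊗[K] Lam K n b :=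
  (TensorProduct.congr (ecast K n (by omega : (a-k) + k = a))
      (ecast K n (by omega : k + (b-k) = b))).toLinearMap
    ∘ₗ pairMul K n mf (a-k) k k (b-k)
    ∘ₗ (TensorProduct.map
        ((Df (a-k) k) ∘ₗ (ecast K n (by omega : a = (a-k) + k)).toLinearMap)
        LinearMap.id)

/-- The map `γ_k : Λ^a ⊗ (Λ^k ⊗ Λ^{b-k}) → Λ^a ⊗ Λ^b`,
`γ_k(x ⊗ y ⊗ z) = x ⊗ (y ∧ z) - β_k(x ⊗ y ⊗ z)`. -/
def gammaMap (a b k : ℕ) (hka : k ≤ a) (hkb : k ≤ b) :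
    Lam K n a ⊗[K] (Lam K n k ⊗[K] Lam K n (b-k)) →ₗ[K] Lam K n a ⊗[K] Lam K n b :=
  (TensorProduct.map LinearMap.id
      ((ecast K n (by omega : k + (b-k) = b)).toLinearMap ∘ₗ mf k (b-k)))
    - betaMap K n mf Df a b k hka hkb

/-- The quantity `d_k(a,b,t)` (for the given `i`), from Lemma 5.3 of the paper. -/
def dInt (a b k i t : ℕ) : ℤ :=
  1 - ∑ j ∈ Finset.Icc (i - min (b-k) i) t,
        (-1:ℤ)^j * ((a-k+j).choose (a-k) : ℤ) * ((b-k+t-i).choose (t-j) : ℤ)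

end MMS

namespace MMS

section SlTwo

variable {K M : Type*} [Field K] [AddCommGroup M] [Module K M]

/-- `E` and `F` raise and lower the weight spaces `W r` of weight `c + 2 * r`, and on these
their commutator acts by the weight. -/
structure IsSlTwoAction (E F : Module.End K M) (W : ℤ → Submodule K M) (c : K) : Prop where
  raise_mem : ∀ {r z}, z ∈ W r → E z ∈ W (r + 1)
  lower_mem : ∀ {r z}, z ∈ W r → F z ∈ W (r - 1)
  commutator : ∀ {r z}, z ∈ W r → E (F z) = F (E z) + (c + 2 * r) • z

namespace IsSlTwoAction

variable {E F : Module.End K M} {W : ℤ → Submodule K M} {c : K}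

lemma raise_pow_mem (h : IsSlTwoAction E F W c) {r : ℤ} {z : M} (hz : z ∈ W r) (m : ℕ) :
    (E ^ m) z ∈ W (r + m) := by
  induction m with
  | zero => simpa using hz
  | succ m ih =>
    rw [pow_succ', Module.End.mul_apply]
    simpa [add_assoc] using h.raise_mem ih

lemma lower_pow_mem (h : IsSlTwoAction E F W c) {r : ℤ} {z : M} (hz : z ∈ W r) (m : ℕ) :
    (F ^ m) z ∈ W (r - m) := by
  induction m with
  | zero => simpa using hz
  | succ m ih =>
    rw [pow_succ', Module.End.mul_apply]
    simpa [sub_sub] using h.lower_mem ih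

lemma raise_pow_lower (h : IsSlTwoAction E F W c) {r : ℤ} {z : M} (hz : z ∈ W r) (m : ℕ) :
    (E ^ (m + 1)) (F z) =
      F ((E ^ (m + 1)) z) + ((m + 1) * (c + 2 * r + m)) • (E ^ m) z := by
  induction m with
  | zero => simpa using h.commutator hz
  | succ m ih =>
    rw [pow_succ', Module.End.mul_apply, ih, map_add, map_smul,
      h.commutator (h.raise_pow_mem hz (m + 1)), ← Module.End.mul_apply E, ← pow_succ',
      ← Module.End.mul_apply E, ← pow_succ', add_assoc, ← add_smul]
    congr 2
    push_cast
    ring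

lemma raise_pow_lower_pow (h : IsSlTwoAction E F W c) {r : ℤ} {z : M} (hz : z ∈ W r)
    (m t : ℕ) :
    ∃ w ∈ W (r + m + 1), (E ^ (m + t)) ((F ^ t) z) =
      F w + (∏ k ∈ Finset.range t, ((m + k + 1 : K) * (c + 2 * r + m - k))) • (E ^ m) z := by
  induction t with
  | zero => exact ⟨0, zero_mem _, by simp⟩
  | succ t ih =>
    obtain ⟨w, hw, hEF⟩ := ih
    have hFt := h.lower_pow_mem hz t
    have hE := h.raise_pow_mem hFt (m + t + 1)
    refine ⟨(E ^ (m + t + 1)) ((F ^ t) z) + ((m + t + 1) * (c + 2 * r + m - t) : K) • w,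
      add_mem ?_ (Submodule.smul_mem _ _ hw), ?_⟩
    · convert hE using 2
      push_cast
      ring
    · rw [← add_assoc, pow_succ' F, Module.End.mul_apply, h.raise_pow_lower hFt, hEF,
        Finset.prod_range_succ]
      simp only [map_add, map_smul]
      push_cast
      module

/-- A nonzero vector of nonnegative weight killed by `E` is not in the image of `F`. -/
lemma eq_zero_of_raise_lower_eq_zero [CharZero K] (h : IsSlTwoAction E F W c) {r : ℤ} {w : M}
    (hw : w ∈ W r) (hEF : E (F w) = 0) {l : ℕ} (hl : c + 2 * r = l + 1)
    {N : ℕ} (hN : (E ^ N) w = 0) : w = 0 := by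
  induction N with
  | zero => simpa using hN
  | succ N ih =>
    apply ih
    have key := h.raise_pow_lower hw N
    rw [pow_succ, Module.End.mul_apply, hEF, map_zero, ← pow_succ, hN, map_zero, zero_add,
      hl] at key
    refine (smul_eq_zero.mp key.symm).resolve_left ?_
    exact_mod_cast (by positivity : (N + 1) * (l + 1 + N) ≠ 0)

end IsSlTwoAction

end SlTwo

section Operators

variable {K : Type} [Field K] {n : ℕ}

open ExteriorAlgebra in
/-- The operator on `Λ ⊗ Λ` moving one vector from the second factor to the end of the first. -/
def raise (K : Type) [Field K] (n : ℕ) :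
    Module.End K (ExteriorAlgebra K (V K n) ⊗[K] ExteriorAlgebra K (V K n)) :=
  ∑ k, TensorProduct.map (LinearMap.mulRight K (ι K (Pi.single k 1)))
    (CliffordAlgebra.contractLeft (LinearMap.proj k))

open ExteriorAlgebra in
/-- The operator on `Λ ⊗ Λ` moving one vector from the first factor to the start of the
second. -/
def lower (K : Type) [Field K] (n : ℕ) :
    Module.End K (ExteriorAlgebra K (V K n) ⊗[K] ExteriorAlgebra K (V K n)) :=
  ∑ k, TensorProduct.map (CliffordAlgebra.contractRight.flip (LinearMap.proj k))
    (LinearMap.mulLeft K (ι K (Pi.single k 1)))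

open CliffordAlgebra (contractLeft contractRight)
open ExteriorAlgebra (ι ιMulti)

lemma raise_tmul (x y : ExteriorAlgebra K (V K n)) :
    raise K n (x ⊗ₜ y) = ∑ k, (x * ι K (Pi.single k 1)) ⊗ₜ contractLeft (LinearMap.proj k) y := by
  simp [raise, LinearMap.sum_apply]

lemma lower_tmul (x y : ExteriorAlgebra K (V K n)) :
    lower K n (x ⊗ₜ y) =
      ∑ k, contractRight x (LinearMap.proj k) ⊗ₜ (ι K (Pi.single k 1) * y) := by
  simp [lower, LinearMap.sum_apply]

lemma sum_smul_ι_single (v : V K n) : ∑ k, v k • ι K (Pi.single k 1 : V K n) = ι K v := by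
  simp only [← map_smul, ← map_sum]
  congr 1
  ext j
  simp [Finset.sum_apply, Pi.single_apply]

lemma raise_lower_tmul (x y : ExteriorAlgebra K (V K n)) :
    raise K n (lower K n (x ⊗ₜ y)) = lower K n (raise K n (x ⊗ₜ y)) +
      (∑ k, contractRight x (LinearMap.proj k) * ι K (Pi.single k 1)) ⊗ₜ y -
      x ⊗ₜ (∑ k, ι K (Pi.single k 1) * contractLeft (LinearMap.proj k) y) := by
  simp only [raise_tmul, lower_tmul, map_sum, CliffordAlgebra.contractLeft_ι_mul, ι,
    CliffordAlgebra.contractRight_mul_ι, LinearMap.proj_apply, TensorProduct.tmul_sub,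
    TensorProduct.sub_tmul, TensorProduct.sum_tmul, TensorProduct.tmul_sum, Finset.sum_sub_distrib]
  simp [Pi.single_apply, ite_smul, TensorProduct.ite_tmul, TensorProduct.tmul_ite]
  rw [Finset.sum_comm]
  abel

lemma sum_ι_mul_contractLeft {q : ℕ} {y : ExteriorAlgebra K (V K n)} (hy : y ∈ ⋀[K]^q (V K n)) :
    ∑ k, ι K (Pi.single k 1) * contractLeft (LinearMap.proj k) y = (q : K) • y := by
  induction q generalizing y with
  | zero =>
    rw [ExteriorAlgebra.exteriorPower, pow_zero, Submodule.mem_one] at hy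
    obtain ⟨r, rfl⟩ := hy
    simp [CliffordAlgebra.contractLeft_algebraMap]
  | succ q ih =>
    rw [ExteriorAlgebra.exteriorPower, pow_succ'] at hy
    induction hy using Submodule.mul_induction_on' with
    | mem_mul_mem v hv y hy =>
      obtain ⟨v, rfl⟩ := hv
      simp only [ι, CliffordAlgebra.contractLeft_ι_mul, mul_sub, Finset.sum_sub_distrib]
      have h1 : ∀ k, CliffordAlgebra.ι (0 : QuadraticForm K (V K n)) (Pi.single k 1) *
          (CliffordAlgebra.ι 0 v * contractLeft (LinearMap.proj k) y) =
          - (CliffordAlgebra.ι 0 v * (CliffordAlgebra.ι 0 (Pi.single k 1) *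
            contractLeft (LinearMap.proj k) y)) := fun k => by
        rw [← mul_assoc, ← mul_assoc, ← neg_mul, eq_neg_of_add_eq_zero_left
          (ExteriorAlgebra.ι_add_mul_swap (R := K) (Pi.single k 1 : V K n) v)]
      simp only [h1, Finset.sum_neg_distrib, ← Finset.mul_sum]
      have h2 := ih hy
      have h3 := sum_smul_ι_single v
      simp only [ι] at h2 h3
      rw [h2]
      simp only [LinearMap.proj_apply, mul_smul_comm, ← smul_mul_assoc]
      rw [← Finset.sum_mul, h3]
      push_cast
      rw [add_smul, one_smul]
      simp [add_comm, add_mul]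
    | add x _ y _ hx hy => simp only [map_add, mul_add, Finset.sum_add_distrib, hx, hy, smul_add]

lemma sum_contractRight_mul_ι {p : ℕ} {x : ExteriorAlgebra K (V K n)} (hx : x ∈ ⋀[K]^p (V K n)) :
    ∑ k, contractRight x (LinearMap.proj k) * ι K (Pi.single k 1) = (p : K) • x := by
  induction p generalizing x with
  | zero =>
    rw [ExteriorAlgebra.exteriorPower, pow_zero, Submodule.mem_one] at hx
    obtain ⟨r, rfl⟩ := hx
    simp [CliffordAlgebra.contractRight_algebraMap]
  | succ p ih =>
    rw [ExteriorAlgebra.exteriorPower, pow_succ] at hx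
    induction hx using Submodule.mul_induction_on' with
    | mem_mul_mem x hx v hv =>
      obtain ⟨v, rfl⟩ := hv
      simp only [ι, CliffordAlgebra.contractRight_mul_ι, sub_mul, Finset.sum_sub_distrib]
      have h1 : ∀ k, contractRight x (LinearMap.proj k) * CliffordAlgebra.ι 0 v *
          CliffordAlgebra.ι (0 : QuadraticForm K (V K n)) (Pi.single k 1) =
          - ((contractRight x (LinearMap.proj k) * CliffordAlgebra.ι 0 (Pi.single k 1)) *
            CliffordAlgebra.ι 0 v) := fun k => by
        rw [mul_assoc, mul_assoc, ← mul_neg, eq_neg_of_add_eq_zero_left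
          (ExteriorAlgebra.ι_add_mul_swap (R := K) v (Pi.single k 1 : V K n))]
      simp only [h1, Finset.sum_neg_distrib, ← Finset.sum_mul]
      have h2 := ih hx
      have h3 := sum_smul_ι_single v
      simp only [ι] at h2 h3
      rw [h2]
      simp only [LinearMap.proj_apply, smul_mul_assoc, ← mul_smul_comm]
      rw [← Finset.mul_sum, h3]
      push_cast
      rw [add_smul, one_smul]
      simp [add_comm, mul_add]
    | add x _ y _ hx hy =>
      simp only [map_add, LinearMap.add_apply, add_mul, Finset.sum_add_distrib, hx, hy, smul_add]

lemma contractLeft_mem {q : ℕ} {y : ExteriorAlgebra K (V K n)} (hy : y ∈ ⋀[K]^(q + 1) (V K n))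
    (d : Module.Dual K (V K n)) : contractLeft (Q := 0) d y ∈ ⋀[K]^q (V K n) := by
  induction q generalizing y with
  | zero =>
    rw [zero_add, ExteriorAlgebra.exteriorPower, pow_one] at hy
    obtain ⟨v, rfl⟩ := hy
    rw [ExteriorAlgebra.exteriorPower, pow_zero, ι, CliffordAlgebra.contractLeft_ι]
    exact Submodule.algebraMap_mem _
  | succ q ih =>
    rw [ExteriorAlgebra.exteriorPower, pow_succ'] at hy
    induction hy using Submodule.mul_induction_on' with
    | mem_mul_mem v hv y hy =>
      obtain ⟨v, rfl⟩ := hv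
      rw [ι, CliffordAlgebra.contractLeft_ι_mul]
      refine sub_mem (Submodule.smul_mem _ _ hy) ?_
      rw [ExteriorAlgebra.exteriorPower, pow_succ']
      exact Submodule.mul_mem_mul (LinearMap.mem_range_self _ v) (ih hy)
    | add x _ y _ hx hy => rw [map_add]; exact add_mem hx hy

lemma contractRight_mem {p : ℕ} {x : ExteriorAlgebra K (V K n)}
    (hx : x ∈ ⋀[K]^(p + 1) (V K n)) (d : Module.Dual K (V K n)) :
    contractRight (Q := 0) x d ∈ ⋀[K]^p (V K n) := by
  induction p generalizing x with
  | zero =>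
    rw [zero_add, ExteriorAlgebra.exteriorPower, pow_one] at hx
    obtain ⟨v, rfl⟩ := hx
    rw [ExteriorAlgebra.exteriorPower, pow_zero, ι, CliffordAlgebra.contractRight_ι]
    exact Submodule.algebraMap_mem _
  | succ p ih =>
    rw [ExteriorAlgebra.exteriorPower, pow_succ] at hx
    induction hx using Submodule.mul_induction_on' with
    | mem_mul_mem x hx v hv =>
      obtain ⟨v, rfl⟩ := hv
      rw [ι, CliffordAlgebra.contractRight_mul_ι]
      refine sub_mem (Submodule.smul_mem _ _ hx) ?_
      rw [ExteriorAlgebra.exteriorPower, pow_succ]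
      exact Submodule.mul_mem_mul (ih hx) (LinearMap.mem_range_self _ v)
    | add x _ y _ hx hy => rw [map_add, LinearMap.add_apply]; exact add_mem hx hy

/-- The exterior powers indexed by `ℤ`, zero in negative degrees. -/
def extPowZ (K : Type) [Field K] (n : ℕ) : ℤ → Submodule K (ExteriorAlgebra K (V K n))
  | .ofNat p => ⋀[K]^p (V K n)
  | .negSucc _ => ⊥

lemma sum_contractRight_mul_ι_of_mem_extPowZ {p : ℤ} {x : ExteriorAlgebra K (V K n)}
    (hx : x ∈ extPowZ K n p) :
    ∑ k, contractRight x (LinearMap.proj k) * ι K (Pi.single k 1) = (p : K) • x := by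
  cases p with
  | ofNat p => simpa using sum_contractRight_mul_ι hx
  | negSucc p => simp [(Submodule.mem_bot K).mp hx]

lemma sum_ι_mul_contractLeft_of_mem_extPowZ {q : ℤ} {y : ExteriorAlgebra K (V K n)}
    (hy : y ∈ extPowZ K n q) :
    ∑ k, ι K (Pi.single k 1) * contractLeft (LinearMap.proj k) y = (q : K) • y := by
  cases q with
  | ofNat q => simpa using sum_ι_mul_contractLeft hy
  | negSucc q => simp [(Submodule.mem_bot K).mp hy]

lemma mul_ι_mem_extPowZ {p : ℤ} {x : ExteriorAlgebra K (V K n)}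
    (hx : x ∈ extPowZ K n p) (v : V K n) : x * ι K v ∈ extPowZ K n (p + 1) := by
  cases p with
  | ofNat p =>
    change _ ∈ LinearMap.range (ι K) ^ (p + 1)
    rw [pow_succ]
    exact Submodule.mul_mem_mul hx (LinearMap.mem_range_self _ v)
  | negSucc p => simp [(Submodule.mem_bot K).mp hx]

lemma ι_mul_mem_extPowZ {q : ℤ} {y : ExteriorAlgebra K (V K n)}
    (hy : y ∈ extPowZ K n q) (v : V K n) : ι K v * y ∈ extPowZ K n (q + 1) := by
  cases q with
  | ofNat q =>
    change _ ∈ LinearMap.range (ι K) ^ (q + 1)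
    rw [pow_succ']
    exact Submodule.mul_mem_mul (LinearMap.mem_range_self _ v) hy
  | negSucc q => simp [(Submodule.mem_bot K).mp hy]

lemma contractLeft_mem_extPowZ {q : ℤ} {y : ExteriorAlgebra K (V K n)}
    (hy : y ∈ extPowZ K n q) (d : Module.Dual K (V K n)) :
    contractLeft (Q := 0) d y ∈ extPowZ K n (q - 1) := by
  rcases q with (_ | q) | q
  · obtain ⟨r, rfl⟩ := Submodule.mem_one.mp hy
    simp [CliffordAlgebra.contractLeft_algebraMap]
  · have h : Int.ofNat (q + 1) - 1 = Int.ofNat q := by simp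
    rw [h]
    exact contractLeft_mem hy d
  · simp [(Submodule.mem_bot K).mp hy]

lemma contractRight_mem_extPowZ {p : ℤ} {x : ExteriorAlgebra K (V K n)}
    (hx : x ∈ extPowZ K n p) (d : Module.Dual K (V K n)) :
    contractRight (Q := 0) x d ∈ extPowZ K n (p - 1) := by
  rcases p with (_ | p) | p
  · obtain ⟨r, rfl⟩ := Submodule.mem_one.mp hx
    simp [CliffordAlgebra.contractRight_algebraMap]
  · have h : Int.ofNat (p + 1) - 1 = Int.ofNat p := by simp
    rw [h]
    exact contractRight_mem hx d
  · simp [(Submodule.mem_bot K).mp hx]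

/-- The span of the `x ⊗ y` with `x` of degree `p` and `y` of degree `q`. -/
def bidegree (K : Type) [Field K] (n : ℕ) (p q : ℤ) :
    Submodule K (ExteriorAlgebra K (V K n) ⊗[K] ExteriorAlgebra K (V K n)) :=
  Submodule.map₂ (TensorProduct.mk K _ _) (extPowZ K n p) (extPowZ K n q)

lemma tmul_mem_bidegree {p q : ℤ} {x y : ExteriorAlgebra K (V K n)}
    (hx : x ∈ extPowZ K n p) (hy : y ∈ extPowZ K n q) : x ⊗ₜ y ∈ bidegree K n p q :=
  Submodule.apply_mem_map₂ (TensorProduct.mk K _ _) hx hy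

lemma isSlTwoAction_raise_lower (a b : ℕ) :
    IsSlTwoAction (raise K n) (lower K n) (fun r => bidegree K n (a + r) (b - r))
      ((a : K) - b) where
  raise_mem {r z} hz := by
    suffices h : bidegree K n (a + r) (b - r) ≤
        (bidegree K n (a + (r + 1)) (b - (r + 1))).comap (raise K n) from h hz
    refine Submodule.map₂_le.mpr fun x hx y hy => ?_
    rw [Submodule.mem_comap, TensorProduct.mk_apply, raise_tmul, ← add_assoc, ← sub_sub]
    exact sum_mem fun k _ =>
      tmul_mem_bidegree (mul_ι_mem_extPowZ hx _) (contractLeft_mem_extPowZ hy _)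
  lower_mem {r z} hz := by
    suffices h : bidegree K n (a + r) (b - r) ≤
        (bidegree K n (a + (r - 1)) (b - (r - 1))).comap (lower K n) from h hz
    refine Submodule.map₂_le.mpr fun x hx y hy => ?_
    rw [Submodule.mem_comap, TensorProduct.mk_apply, lower_tmul, ← add_sub_assoc, ← sub_add]
    exact sum_mem fun k _ =>
      tmul_mem_bidegree (contractRight_mem_extPowZ hx _) (ι_mul_mem_extPowZ hy _)
  commutator {r z} hz := by
    suffices h : bidegree K n (a + r) (b - r) ≤ LinearMap.eqLocus (raise K n * lower K n)
        (lower K n * raise K n + ((a : K) - b + 2 * r) • 1) from h hz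
    refine Submodule.map₂_le.mpr fun x hx y hy => ?_
    rw [LinearMap.mem_eqLocus, TensorProduct.mk_apply, Module.End.mul_apply, raise_lower_tmul,
      sum_contractRight_mul_ι_of_mem_extPowZ hx, sum_ι_mul_contractLeft_of_mem_extPowZ hy]
    simp only [LinearMap.add_apply, Module.End.mul_apply, LinearMap.smul_apply,
      Module.End.one_apply, ← TensorProduct.smul_tmul', TensorProduct.tmul_smul]
    push_cast
    module

lemma contractLeft_ιMulti (d : Module.Dual K (V K n)) {t : ℕ} (w : Fin (t + 1) → V K n) :
    contractLeft (Q := 0) d (ιMulti K (t + 1) w) =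
      ∑ j : Fin (t + 1), ((-1 : K) ^ (j : ℕ) * d (w j)) •
        ιMulti K t (fun i => w (j.succAbove i)) := by
  induction t with
  | zero =>
    simp [ExteriorAlgebra.ιMulti_succ_apply, ι, Algebra.algebraMap_eq_smul_one]
  | succ t ih =>
    rw [ExteriorAlgebra.ιMulti_succ_apply, ι, CliffordAlgebra.contractLeft_ι_mul, ih,
      Finset.mul_sum, sub_eq_add_neg, ← Finset.sum_neg_distrib, Fin.sum_univ_succ (n := t + 1)]
    congr 1
    · simp [Matrix.vecTail, Function.comp_def]
    · refine Finset.sum_congr rfl fun j _ => ?_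
      rw [ExteriorAlgebra.ιMulti_succ_apply (fun i => w (j.succ.succAbove i))]
      simp [Matrix.vecTail, Function.comp_def, ι, pow_succ]

lemma raise_tmul_ιMulti (x : ExteriorAlgebra K (V K n)) {t : ℕ} (w : Fin (t + 1) → V K n) :
    raise K n (x ⊗ₜ ιMulti K (t + 1) w) =
      ∑ j : Fin (t + 1), (-1 : K) ^ (j : ℕ) •
        (x * ι K (w j)) ⊗ₜ ιMulti K t (fun i => w (j.succAbove i)) := by
  simp only [raise_tmul, contractLeft_ιMulti, TensorProduct.tmul_sum, LinearMap.proj_apply]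
  rw [Finset.sum_comm]
  refine Finset.sum_congr rfl fun j _ => ?_
  rw [← sum_smul_ι_single (w j), Finset.mul_sum, TensorProduct.sum_tmul, Finset.smul_sum]
  refine Finset.sum_congr rfl fun k _ => ?_
  rw [TensorProduct.tmul_smul, mul_smul_comm, ← TensorProduct.smul_tmul', smul_smul]

lemma ιMulti_succ_last {s : ℕ} (f : Fin (s + 1) → V K n) :
    ιMulti K (s + 1) f = ιMulti K s (fun i => f i.castSucc) * ι K (f (Fin.last s)) := by
  simp only [ExteriorAlgebra.ιMulti_apply, List.ofFn_succ', List.concat_eq_append,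
    List.prod_append, List.prod_singleton]

/-- The permutation of `Fin (s + t)` acting by `α` on the first `s` and by `β` on the last `t`
indices. -/
def blockPerm {s t : ℕ} (α : Equiv.Perm (Fin s)) (β : Equiv.Perm (Fin t)) :
    Equiv.Perm (Fin (s + t)) :=
  finSumFinEquiv.permCongr (Equiv.Perm.sumCongr α β)

@[simp]
lemma blockPerm_castAdd {s t : ℕ} (α : Equiv.Perm (Fin s)) (β : Equiv.Perm (Fin t)) (i : Fin s) :
    blockPerm α β (Fin.castAdd t i) = Fin.castAdd t (α i) := by
  simp [blockPerm, Equiv.permCongr_apply]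

@[simp]
lemma blockPerm_natAdd {s t : ℕ} (α : Equiv.Perm (Fin s)) (β : Equiv.Perm (Fin t)) (i : Fin t) :
    blockPerm α β (Fin.natAdd s i) = Fin.natAdd s (β i) := by
  simp [blockPerm, Equiv.permCongr_apply]

@[simp]
lemma sign_blockPerm {s t : ℕ} (α : Equiv.Perm (Fin s)) (β : Equiv.Perm (Fin t)) :
    Equiv.Perm.sign (blockPerm α β) = Equiv.Perm.sign α * Equiv.Perm.sign β := by
  simp [blockPerm]

/-- The sum over all permutations `σ` of the signed
`(v_{σ(1)} ∧ ⋯ ∧ v_{σ(s)}) ⊗ (v_{σ(s+1)} ∧ ⋯ ∧ v_{σ(N)})`, where `N = s + t`. -/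
def permSum {N s t : ℕ} (h : s + t = N) (v : Fin N → V K n) :
    ExteriorAlgebra K (V K n) ⊗[K] ExteriorAlgebra K (V K n) :=
  ∑ σ : Equiv.Perm (Fin N), (Equiv.Perm.sign σ : ℤ) •
    (ιMulti K s (fun i => v (σ (Fin.cast h (Fin.castAdd t i)))) ⊗ₜ
      ιMulti K t (fun i => v (σ (Fin.cast h (Fin.natAdd s i)))))

lemma raise_permSum {N s t : ℕ} (h : s + (t + 1) = N) (h' : s + 1 + t = N) (v : Fin N → V K n) :
    raise K n (permSum h v) = (t + 1 : K) • permSum h' v := by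
  subst h
  let G : Equiv.Perm (Fin (s + (t + 1))) →
      ExteriorAlgebra K (V K n) ⊗[K] ExteriorAlgebra K (V K n) := fun σ =>
    (Equiv.Perm.sign σ : ℤ) •
      ((ιMulti K s (fun i => v (σ (Fin.castAdd (t + 1) i))) * ι K (v (σ (Fin.natAdd s 0)))) ⊗ₜ
        ιMulti K t (fun i => v (σ (Fin.natAdd s i.succ))))
  have hG : permSum h' v = ∑ σ, G σ := by
    refine Finset.sum_congr rfl fun σ _ => ?_
    have hl (i : Fin s) : Fin.cast h' (Fin.castAdd t i.castSucc) = Fin.castAdd (t + 1) i := rfl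
    have hm : Fin.cast h' (Fin.castAdd t (Fin.last s)) = Fin.natAdd s 0 := rfl
    have hr (i : Fin t) : Fin.cast h' (Fin.natAdd (s + 1) i) = Fin.natAdd s i.succ :=
      Fin.ext (by simp; omega)
    simp only [ιMulti_succ_last, hl, hm, hr, G]
  have hterm : ∀ (σ : Equiv.Perm (Fin (s + (t + 1)))) (j : Fin (t + 1)),
      (Equiv.Perm.sign σ : ℤ) • ((-1 : K) ^ (j : ℕ) •
        (ιMulti K s (fun i => v (σ (Fin.castAdd (t + 1) i))) *
          ι K (v (σ (Fin.natAdd s j)))) ⊗ₜ[K]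
          ιMulti K t (fun i => v (σ (Fin.natAdd s (j.succAbove i))))) =
      G (σ * blockPerm 1 j.cycleRange.symm) := by
    intro σ j
    simp only [G, Equiv.Perm.mul_apply, blockPerm_castAdd, blockPerm_natAdd,
      Fin.cycleRange_symm_zero, Fin.cycleRange_symm_succ, Equiv.Perm.one_apply, map_mul,
      sign_blockPerm, Equiv.Perm.sign_symm, Fin.sign_cycleRange, map_one, one_mul]
    push_cast
    rw [mul_smul]
    congr 1
    rcases neg_one_pow_eq_or ℤ (j : ℕ) with hj | hj <;>
      rcases Nat.even_or_odd (j : ℕ) with he | he <;> simp_all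
  rw [hG]
  simp only [permSum, Fin.cast_refl, id_eq, map_sum, map_zsmul, raise_tmul_ιMulti,
    Finset.smul_sum]
  simp only [hterm]
  rw [Finset.sum_comm, ← Finset.smul_sum]
  have hsum : ∀ τ : Equiv.Perm (Fin (s + (t + 1))), ∑ σ, G (σ * τ) = ∑ σ, G σ := fun τ =>
    Fintype.sum_equiv (Equiv.mulRight τ) _ _ fun _ => rfl
  simp only [hsum, Finset.sum_const, Finset.card_univ, Fintype.card_fin,
    ← Nat.cast_smul_eq_nsmul K, Nat.cast_add_one]

lemma factorial_smul_raise_pow [CharZero K] {N s t : ℕ} (h : s + t = N) (v : Fin N → V K n) :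
    (t.factorial : K) • (raise K n ^ s) (1 ⊗ₜ ιMulti K N v) = permSum h v := by
  induction s generalizing t with
  | zero =>
    obtain rfl : t = N := by omega
    have hterm : ∀ σ : Equiv.Perm (Fin t),
        (Equiv.Perm.sign σ : ℤ) • ((1 : ExteriorAlgebra K (V K n)) ⊗ₜ[K]
          ιMulti K t (fun i => v (σ i))) = 1 ⊗ₜ ιMulti K t v := fun σ => by
      have hσ := (ιMulti K t).map_perm v σ
      rw [Function.comp_def] at hσ
      rw [hσ]
      rcases Int.units_eq_one_or (Equiv.Perm.sign σ) with hs | hs <;>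
        simp [hs, TensorProduct.tmul_neg]
    simp only [permSum, ExteriorAlgebra.ιMulti_zero_apply]
    have hcast : ∀ i : Fin t, Fin.cast h (Fin.natAdd 0 i) = i := fun i => by ext; simp
    simp only [hcast, hterm]
    simp [Fintype.card_perm, Nat.cast_smul_eq_nsmul]
  | succ s ih =>
    have key := congrArg (raise K n) (ih (t := t + 1) (by omega))
    rw [raise_permSum _ h, map_smul, Nat.factorial_succ, ← Module.End.mul_apply, ← pow_succ',
      Nat.cast_mul, mul_smul, Nat.cast_add_one] at key
    exact smul_right_injective _ (Nat.cast_add_one_ne_zero t) key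

lemma strictMono_of_mem_shuffles_left {s t : ℕ} {σ : Equiv.Perm (Fin (s + t))}
    (hσ : σ ∈ shuffles s t) : StrictMono fun i => σ (Fin.castAdd t i) :=
  fun i j hij => (Finset.mem_filter.mp hσ).2.1 _ _ hij (by simp)

lemma strictMono_of_mem_shuffles_right {s t : ℕ} {σ : Equiv.Perm (Fin (s + t))}
    (hσ : σ ∈ shuffles s t) : StrictMono fun i => σ (Fin.natAdd s i) :=
  fun i j hij => (Finset.mem_filter.mp hσ).2.2 _ _ (by simpa using hij) (by simp)

lemma mem_shuffles {s t : ℕ} {σ : Equiv.Perm (Fin (s + t))}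
    (hl : StrictMono fun i => σ (Fin.castAdd t i)) (hr : StrictMono fun i => σ (Fin.natAdd s i)) :
    σ ∈ shuffles s t := by
  refine Finset.mem_filter.mpr ⟨Finset.mem_univ _, fun i j hij hj => ?_, fun i j hij hi => ?_⟩
  · have := @hl ⟨i, by omega⟩ ⟨j, hj⟩ (by simpa using hij)
    simpa using this
  · have hi' : Fin.natAdd s ⟨i - s, by omega⟩ = i := Fin.ext (by simp; omega)
    have hj' : Fin.natAdd s ⟨j - s, by omega⟩ = j := Fin.ext (by simp; omega)
    simpa only [hi', hj'] using @hr ⟨i - s, by omega⟩ ⟨j - s, by omega⟩ (by simp; omega)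

lemma eq_of_strictMono_comp_perm {α : Type*} [LinearOrder α] {m : ℕ} {f g : Fin m → α}
    (hf : StrictMono f) (hg : StrictMono g) {σ τ : Equiv.Perm (Fin m)} (h : f ∘ σ = g ∘ τ) :
    f = g ∧ σ = τ := by
  have hfg : f = g := by
    refine (StrictMono.range_inj hf hg).mp ?_
    rw [← σ.surjective.range_comp f, h, τ.surjective.range_comp]
  refine ⟨hfg, Equiv.ext fun i => hg.injective ?_⟩
  have hi := congrFun h i
  rwa [hfg] at hi

lemma sum_perm_eq_sum_shuffles {M : Type*} [AddCommMonoid M] (s t : ℕ)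
    (f : Equiv.Perm (Fin (s + t)) → M) :
    ∑ σ, f σ = ∑ σ ∈ shuffles s t, ∑ h : Equiv.Perm (Fin s) × Equiv.Perm (Fin t),
      f (σ * blockPerm h.1 h.2) := by
  rw [← Finset.sum_product']
  symm
  refine Finset.sum_bij (fun x _ => x.1 * blockPerm x.2.1 x.2.2) (fun _ _ => Finset.mem_univ _)
    ?_ ?_ fun _ _ => rfl
  · rintro ⟨σ, α, β⟩ hσ ⟨τ, α', β'⟩ hτ h
    rw [Finset.mem_product] at hσ hτ
    obtain ⟨hl, rfl⟩ := eq_of_strictMono_comp_perm (σ := α) (τ := α')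
      (strictMono_of_mem_shuffles_left hσ.1) (strictMono_of_mem_shuffles_left hτ.1)
      (funext fun i => by simpa using Equiv.congr_fun h (Fin.castAdd t i))
    obtain ⟨hr, rfl⟩ := eq_of_strictMono_comp_perm (σ := β) (τ := β')
      (strictMono_of_mem_shuffles_right hσ.1) (strictMono_of_mem_shuffles_right hτ.1)
      (funext fun i => by simpa using Equiv.congr_fun h (Fin.natAdd s i))
    obtain rfl : σ = τ := mul_right_cancel h
    rfl
  · intro σ _
    let α := Tuple.sort fun i => σ (Fin.castAdd t i)
    let β := Tuple.sort fun i => σ (Fin.natAdd s i)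
    refine ⟨(σ * blockPerm α β, α⁻¹, β⁻¹), Finset.mem_product.mpr ⟨mem_shuffles ?_ ?_,
      Finset.mem_univ _⟩, ?_⟩
    · simp only [Equiv.Perm.mul_apply, blockPerm_castAdd]
      exact (Tuple.monotone_sort fun i => σ (Fin.castAdd t i)).strictMono_of_injective
        (σ.injective.comp ((Fin.castAdd_injective s t).comp α.injective))
    · simp only [Equiv.Perm.mul_apply, blockPerm_natAdd]
      exact (Tuple.monotone_sort fun i => σ (Fin.natAdd s i)).strictMono_of_injective
        (σ.injective.comp ((Fin.natAdd_injective t s).comp β.injective))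
    · refine Equiv.ext fun i => ?_
      refine Fin.addCases (fun i => ?_) (fun i => ?_) i <;> simp

lemma permSum_eq_sum_shuffles {s t : ℕ} (v : Fin (s + t) → V K n) :
    permSum rfl v = (s.factorial * t.factorial : K) • ∑ σ ∈ shuffles s t,
      (Equiv.Perm.sign σ : ℤ) •
        (ιMulti K s (fun i => v (σ (Fin.castAdd t i))) ⊗ₜ[K]
          ιMulti K t (fun i => v (σ (Fin.natAdd s i)))) := by
  rw [permSum, sum_perm_eq_sum_shuffles, Finset.smul_sum]
  refine Finset.sum_congr rfl fun σ _ => ?_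
  have hterm : ∀ h : Equiv.Perm (Fin s) × Equiv.Perm (Fin t),
      (Equiv.Perm.sign (σ * blockPerm h.1 h.2) : ℤ) •
        (ιMulti K s (fun i => v ((σ * blockPerm h.1 h.2) (Fin.cast rfl (Fin.castAdd t i)))) ⊗ₜ[K]
          ιMulti K t (fun i => v ((σ * blockPerm h.1 h.2) (Fin.cast rfl (Fin.natAdd s i))))) =
      (Equiv.Perm.sign σ : ℤ) •
        (ιMulti K s (fun i => v (σ (Fin.castAdd t i))) ⊗ₜ[K]
          ιMulti K t (fun i => v (σ (Fin.natAdd s i)))) := by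
    rintro ⟨α, β⟩
    have hα := (ιMulti K s).map_perm (fun i => v (σ (Fin.castAdd t i))) α
    have hβ := (ιMulti K t).map_perm (fun i => v (σ (Fin.natAdd s i))) β
    simp only [Function.comp_def] at hα hβ
    simp only [Fin.cast_refl, id_eq, Equiv.Perm.mul_apply, blockPerm_castAdd, blockPerm_natAdd,
      hα, hβ, map_mul, sign_blockPerm]
    rcases Int.units_eq_one_or (Equiv.Perm.sign α) with h | h <;>
      rcases Int.units_eq_one_or (Equiv.Perm.sign β) with h' | h' <;>
      simp [h, h', TensorProduct.tmul_neg, TensorProduct.neg_tmul]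
  simp only [hterm]
  simp only [Finset.sum_const, Finset.card_univ, Fintype.card_prod, Fintype.card_perm,
    Fintype.card_fin, ← Nat.cast_smul_eq_nsmul K, Nat.cast_mul]

lemma raise_pow_one_tmul [CharZero K] {s t : ℕ} (v : Fin (s + t) → V K n) :
    (raise K n ^ s) (1 ⊗ₜ ιMulti K (s + t) v) = (s.factorial : K) • ∑ σ ∈ shuffles s t,
      (Equiv.Perm.sign σ : ℤ) •
        (ιMulti K s (fun i => v (σ (Fin.castAdd t i))) ⊗ₜ[K]
          ιMulti K t (fun i => v (σ (Fin.natAdd s i)))) := by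
  refine smul_right_injective _
    (Nat.cast_ne_zero.mpr t.factorial_ne_zero : (t.factorial : K) ≠ 0) ?_
  simp only
  rw [factorial_smul_raise_pow rfl, permSum_eq_sum_shuffles, smul_smul, mul_comm]

lemma raise_pow_card_one_tmul [CharZero K] {N : ℕ} (v : Fin N → V K n) :
    (raise K n ^ N) (1 ⊗ₜ ιMulti K N v) = (N.factorial : K) • (ιMulti K N v ⊗ₜ 1) := by
  have key := factorial_smul_raise_pow (t := 0) (add_zero N) v
  have hterm : ∀ σ : Equiv.Perm (Fin N),
      (Equiv.Perm.sign σ : ℤ) • (ιMulti K N (fun i => v (σ i)) ⊗ₜ[K]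
        (1 : ExteriorAlgebra K (V K n))) = ιMulti K N v ⊗ₜ 1 := fun σ => by
    have hσ := (ιMulti K N).map_perm v σ
    rw [Function.comp_def] at hσ
    rw [hσ]
    rcases Int.units_eq_one_or (Equiv.Perm.sign σ) with hs | hs <;>
      simp [hs, TensorProduct.neg_tmul]
  have hcast : ∀ i : Fin N, Fin.cast (add_zero N) (Fin.castAdd 0 i) = i := fun i => rfl
  simp only [permSum, ExteriorAlgebra.ιMulti_zero_apply, hcast, hterm] at key
  simpa [Fintype.card_perm, Nat.cast_smul_eq_nsmul] using key

lemma factorial_smul_lower_pow_raise_pow [CharZero K] {N s t : ℕ} (h : s + t = N)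
    {x : ExteriorAlgebra K (V K n)} (hx : x ∈ ⋀[K]^N (V K n)) :
    (s.factorial : K) • (lower K n ^ t) ((raise K n ^ N) (1 ⊗ₜ x)) =
      (N.factorial * t.factorial : K) • (raise K n ^ s) (1 ⊗ₜ x) := by
  induction t generalizing s with
  | zero =>
    obtain rfl : s = N := h
    simp
  | succ t ih =>
    have key := congrArg (lower K n) (ih (s := s + 1) (by omega))
    have hmem : (1 : ExteriorAlgebra K (V K n)) ⊗ₜ[K] x ∈
        bidegree K n ((0 : ℕ) + 0) ((N : ℕ) - 0) :=
      tmul_mem_bidegree (Submodule.one_le.mp (le_of_eq (pow_zero _).symm))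
        (by rw [sub_zero]; exact hx)
    have hcomm := (isSlTwoAction_raise_lower 0 N).raise_pow_lower hmem s
    have hlow : lower K n (1 ⊗ₜ x) = 0 := by
      simp [lower_tmul]
    have hN : (N : K) = s + t + 1 := by exact_mod_cast h.symm
    rw [hlow, map_zero, hN] at hcomm
    have hcomm' : lower K n ((raise K n ^ (s + 1)) (1 ⊗ₜ x)) =
        ((s + 1) * (t + 1) : K) • (raise K n ^ s) (1 ⊗ₜ x) := by
      rw [eq_comm, ← sub_eq_zero, ← neg_eq_zero, hcomm, neg_sub, sub_eq_add_neg, ← neg_smul]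
      congr 2
      push_cast
      ring
    rw [map_smul, map_smul, ← Module.End.mul_apply, ← pow_succ', hcomm', smul_smul,
      Nat.factorial_succ, Nat.cast_mul, mul_smul] at key
    refine smul_right_injective _ (Nat.cast_ne_zero.mpr s.succ_ne_zero : ((s + 1 : ℕ) : K) ≠ 0) ?_
    simp only
    rw [key, smul_smul, Nat.factorial_succ]
    congr 1
    push_cast
    ring

/-- The inclusion of `Λ^p ⊗ Λ^q` into `Λ ⊗ Λ`. -/
def incl (K : Type) [Field K] (n p q : ℕ) :
    Lam K n p ⊗[K] Lam K n q →ₗ[K] ExteriorAlgebra K (V K n) ⊗[K] ExteriorAlgebra K (V K n) :=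
  TensorProduct.map (Submodule.subtype _) (Submodule.subtype _)

@[simp]
lemma incl_tmul {p q : ℕ} (x : Lam K n p) (y : Lam K n q) :
    incl K n p q (x ⊗ₜ y) = (x : ExteriorAlgebra K (V K n)) ⊗ₜ (y : ExteriorAlgebra K (V K n)) :=
  rfl

lemma incl_injective (p q : ℕ) : Function.Injective (incl K n p q) :=
  TensorProduct.map_injective_of_flat_flat _ _ (Submodule.subtype_injective _)
    (Submodule.subtype_injective _)

lemma range_incl (p q : ℕ) : LinearMap.range (incl K n p q) = bidegree K n p q := by
  apply le_antisymm
  · rintro _ ⟨z, rfl⟩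
    induction z with
    | zero => simp
    | tmul x y => exact tmul_mem_bidegree x.2 y.2
    | add x y hx hy => simpa using add_mem hx hy
  · exact Submodule.map₂_le.mpr fun x hx y hy =>
      ⟨(⟨x, hx⟩ : Lam K n p) ⊗ₜ (⟨y, hy⟩ : Lam K n q), rfl⟩

lemma incl_mem (p q : ℕ) (z : Lam K n p ⊗[K] Lam K n q) : incl K n p q z ∈ bidegree K n p q := by
  rw [← range_incl]
  exact LinearMap.mem_range_self _ z

lemma coe_ecast [CharZero K] {p q : ℕ} (h : p = q) (x : Lam K n p) :
    (ecast K n h x : ExteriorAlgebra K (V K n)) = x := by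
  subst h
  rfl

lemma coe_wedge [CharZero K] {p : ℕ} (v : Fin p → V K n) :
    (wedge K n v : ExteriorAlgebra K (V K n)) = ιMulti K p v := rfl

lemma incl_congr_ecast [CharZero K] {p q p' q' : ℕ} (hp : p = p') (hq : q = q')
    (z : Lam K n p ⊗[K] Lam K n q) :
    incl K n p' q' (TensorProduct.congr (ecast K n hp) (ecast K n hq) z) = incl K n p q z := by
  subst hp hq
  exact congrArg (incl K n p q) (LinearEquiv.congr_fun TensorProduct.congr_refl_refl z)

lemma span_range_wedge [CharZero K] (p : ℕ) :
    Submodule.span K (Set.range (wedge K n (p := p))) = ⊤ :=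
  exteriorPower.ιMulti_span K p (V K n)

lemma IsMulMap.coe_apply [CharZero K] {p q : ℕ}
    {m : Lam K n p ⊗[K] Lam K n q →ₗ[K] Lam K n (p + q)} (hm : IsMulMap K n p q m)
    (x : Lam K n p) (y : Lam K n q) :
    (m (x ⊗ₜ y) : ExteriorAlgebra K (V K n)) = x * y := by
  suffices h : (Submodule.subtype _ ∘ₗ m) ∘ₗ TensorProduct.mk K _ _ x =
      LinearMap.mulLeft K (x : ExteriorAlgebra K (V K n)) ∘ₗ Submodule.subtype _ from
    LinearMap.congr_fun h y
  refine LinearMap.ext_on_range (span_range_wedge q) fun w => ?_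
  suffices h : (Submodule.subtype _ ∘ₗ m) ∘ₗ (TensorProduct.mk K _ _).flip (wedge K n w) =
      LinearMap.mulRight K (wedge K n w : ExteriorAlgebra K (V K n)) ∘ₗ Submodule.subtype _ from
    LinearMap.congr_fun h x
  refine LinearMap.ext_on_range (span_range_wedge p) fun v => ?_
  simp [hm v w, coe_wedge, ExteriorAlgebra.ιMulti_mul_ιMulti]

lemma IsComulMap.factorial_smul_incl_eq_raise_pow [CharZero K] {s t : ℕ}
    {D : Lam K n (s + t) →ₗ[K] Lam K n s ⊗[K] Lam K n t} (hD : IsComulMap K n s t D)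
    (x : Lam K n (s + t)) :
    (s.factorial : K) • incl K n s t (D x) =
      (raise K n ^ s) (1 ⊗ₜ (x : ExteriorAlgebra K (V K n))) := by
  suffices h : (s.factorial : K) • incl K n s t ∘ₗ D =
      (raise K n ^ s) ∘ₗ TensorProduct.mk K _ _ 1 ∘ₗ Submodule.subtype _ from
    LinearMap.congr_fun h x
  refine LinearMap.ext_on_range (span_range_wedge (s + t)) fun v => ?_
  simp [hD v, coe_wedge, raise_pow_one_tmul]

lemma IsComulMap.factorial_smul_incl_eq_lower_pow [CharZero K] {s t : ℕ}
    {D : Lam K n (s + t) →ₗ[K] Lam K n s ⊗[K] Lam K n t} (hD : IsComulMap K n s t D)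
    (x : Lam K n (s + t)) :
    (t.factorial : K) • incl K n s t (D x) =
      (lower K n ^ t) ((x : ExteriorAlgebra K (V K n)) ⊗ₜ 1) := by
  have hraise : (raise K n ^ (s + t)) (1 ⊗ₜ (x : ExteriorAlgebra K (V K n))) =
      ((s + t).factorial : K) • ((x : ExteriorAlgebra K (V K n)) ⊗ₜ 1) := by
    suffices h : (raise K n ^ (s + t)) ∘ₗ TensorProduct.mk K _ _ 1 ∘ₗ
        Submodule.subtype (⋀[K]^(s + t) (V K n)) =
        ((s + t).factorial : K) • ((TensorProduct.mk K _ _).flip 1 ∘ₗ Submodule.subtype _) from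
      LinearMap.congr_fun h x
    refine LinearMap.ext_on_range (span_range_wedge (s + t)) fun v => ?_
    simp [coe_wedge, raise_pow_card_one_tmul]
  have key := factorial_smul_lower_pow_raise_pow rfl x.2
  rw [hraise, ← hD.factorial_smul_incl_eq_raise_pow x, map_smul] at key
  refine smul_right_injective _ (mul_ne_zero (Nat.cast_ne_zero.mpr s.factorial_ne_zero)
    (Nat.cast_ne_zero.mpr (s + t).factorial_ne_zero) :
    (s.factorial * (s + t).factorial : K) ≠ 0) ?_
  simp only
  rw [mul_smul _ _ ((lower K n ^ t) _), key]
  simp only [smul_smul]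
  congr 1
  ring

lemma raise_pow_tmul (s : ℕ) (x y : ExteriorAlgebra K (V K n)) :
    (raise K n ^ s) (x ⊗ₜ y) =
      TensorProduct.map (LinearMap.mulLeft K x) LinearMap.id ((raise K n ^ s) (1 ⊗ₜ y)) := by
  have h : Commute (raise K n) (TensorProduct.map (LinearMap.mulLeft K x) LinearMap.id) := by
    refine TensorProduct.ext' fun u w => ?_
    simp [raise_tmul, mul_assoc]
  have := LinearMap.congr_fun (h.pow_left s).eq (1 ⊗ₜ y)
  simpa using this

lemma lower_pow_tmul (s : ℕ) (x y : ExteriorAlgebra K (V K n)) :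
    (lower K n ^ s) (x ⊗ₜ y) =
      TensorProduct.map LinearMap.id (LinearMap.mulRight K y) ((lower K n ^ s) (x ⊗ₜ 1)) := by
  have h : Commute (lower K n) (TensorProduct.map LinearMap.id (LinearMap.mulRight K y)) := by
    refine TensorProduct.ext' fun u w => ?_
    simp [lower_tmul, mul_assoc]
  have := LinearMap.congr_fun (h.pow_left s).eq (x ⊗ₜ 1)
  simpa using this

section Frozen

variable [CharZero K] {mf : ∀ p q : ℕ, Lam K n p ⊗[K] Lam K n q →ₗ[K] Lam K n (p + q)}
  {Df : ∀ p q : ℕ, Lam K n (p + q) →ₗ[K] Lam K n p ⊗[K] Lam K n q}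

lemma factorial_smul_incl_deltaMap (hmf : ∀ p q, IsMulMap K n p q (mf p q))
    (hDf : ∀ p q, IsComulMap K n p q (Df p q)) {a b t : ℕ} (ht : t ≤ b)
    (z : Lam K n a ⊗[K] Lam K n b) :
    (t.factorial : K) • incl K n _ _ (deltaMap K n mf Df a b t ht z) =
      (raise K n ^ t) (incl K n a b z) := by
  induction z with
  | zero => simp
  | add z w hz hw => simp only [map_add, smul_add, hz, hw]
  | tmul x y =>
    have hmul : ∀ d : Lam K n t ⊗[K] Lam K n (b - t),
        incl K n _ _ (TensorProduct.map (mf a t) LinearMap.id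
          ((TensorProduct.assoc K _ _ _).symm (x ⊗ₜ d))) =
        TensorProduct.map (LinearMap.mulLeft K (x : ExteriorAlgebra K (V K n))) LinearMap.id
          (incl K n _ _ d) := fun d => by
      induction d with
      | zero => simp
      | add d e hd he => simp only [map_add, TensorProduct.tmul_add, hd, he]
      | tmul d e => simp [(hmf a t).coe_apply]
    rw [incl_tmul, raise_pow_tmul, ← coe_ecast (by omega : b = t + (b - t)) y,
      ← (hDf _ _).factorial_smul_incl_eq_raise_pow, map_smul, ← hmul]
    simp [deltaMap]

lemma factorial_smul_incl_thetaMap (hmf : ∀ p q, IsMulMap K n p q (mf p q))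
    (hDf : ∀ p q, IsComulMap K n p q (Df p q)) {a b t : ℕ} (ht : t ≤ a)
    (z : Lam K n a ⊗[K] Lam K n b) :
    (t.factorial : K) • incl K n _ _ (thetaMap K n mf Df a b t ht z) =
      (lower K n ^ t) (incl K n a b z) := by
  induction z with
  | zero => simp
  | add z w hz hw => simp only [map_add, smul_add, hz, hw]
  | tmul x y =>
    have hmul : ∀ d : Lam K n (a - t) ⊗[K] Lam K n t,
        incl K n _ _ (TensorProduct.map LinearMap.id
          ((ecast K n (by omega : t + b = b + t)).toLinearMap ∘ₗ mf t b)
          (TensorProduct.assoc K _ _ _ (d ⊗ₜ y))) =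
        TensorProduct.map LinearMap.id (LinearMap.mulRight K (y : ExteriorAlgebra K (V K n)))
          (incl K n _ _ d) := fun d => by
      induction d with
      | zero => simp
      | add d e hd he => simp only [map_add, TensorProduct.add_tmul, hd, he]
      | tmul d e => simp [(hmf t b).coe_apply, coe_ecast]
    rw [incl_tmul, lower_pow_tmul, ← coe_ecast (by omega : a = a - t + t) x,
      ← (hDf _ _).factorial_smul_incl_eq_lower_pow, map_smul, ← hmul]
    simp [thetaMap]

lemma incl_theta1 (hmf : ∀ p q, IsMulMap K n p q (mf p q))
    (hDf : ∀ p q, IsComulMap K n p q (Df p q)) {a b : ℕ} (hb : 1 ≤ b)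
    (z : Lam K n (a + 1) ⊗[K] Lam K n (b - 1)) :
    incl K n a b (theta1 K n mf Df a b hb z) = lower K n (incl K n _ _ z) := by
  rw [theta1, LinearMap.comp_apply, LinearEquiv.coe_coe, incl_congr_ecast]
  simpa using factorial_smul_incl_thetaMap hmf hDf (by omega : 1 ≤ a + 1) z

lemma factorial_sq_smul_incl_PhiMap (hmf : ∀ p q, IsMulMap K n p q (mf p q))
    (hDf : ∀ p q, IsComulMap K n p q (Df p q)) {a b t : ℕ} (hta : t ≤ a) (htb : t ≤ b)
    (z : Lam K n a ⊗[K] Lam K n b) :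
    (t.factorial * t.factorial : K) • incl K n a b (PhiMap K n mf Df a b t hta htb z) =
      (lower K n ^ t) ((raise K n ^ t) (incl K n a b z)) := by
  rw [PhiMap, LinearMap.comp_apply, LinearMap.comp_apply, LinearEquiv.coe_coe, incl_congr_ecast,
    mul_smul, factorial_smul_incl_thetaMap hmf hDf, ← map_smul,
    factorial_smul_incl_deltaMap hmf hDf]

lemma mem_schurRel_iff (hmf : ∀ p q, IsMulMap K n p q (mf p q))
    (hDf : ∀ p q, IsComulMap K n p q (Df p q)) {p q : ℕ} (z : Lam K n p ⊗[K] Lam K n q) :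
    z ∈ schurRel K n mf Df p q ↔
      ∃ w ∈ bidegree K n (p + 1) (q - 1), lower K n w = incl K n p q z := by
  rcases q.eq_zero_or_pos with rfl | hq
  · have hbot : bidegree K n (p + 1) ((0 : ℕ) - 1) = ⊥ := by
      change Submodule.map₂ _ _ ⊥ = ⊥
      simp
    rw [hbot]
    simp only [schurRel, Submodule.mem_bot, exists_eq_left, map_zero]
    rw [dif_neg (by omega), Submodule.mem_bot, eq_comm (a := 0),
      map_eq_zero_iff _ (incl_injective p 0)]
  · have hbi : bidegree K n (p + 1) (q - 1) = LinearMap.range (incl K n (p + 1) (q - 1)) := by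
      rw [range_incl]
      push_cast [hq]
      rfl
    rw [hbi, schurRel, dif_pos (by omega : 1 ≤ q)]
    constructor
    · rintro ⟨w, rfl⟩
      exact ⟨_, LinearMap.mem_range_self _ w, (incl_theta1 hmf hDf hq w).symm⟩
    · rintro ⟨_, ⟨w, rfl⟩, hw⟩
      refine ⟨w, incl_injective p q ?_⟩
      rw [incl_theta1 hmf hDf, hw]

end Frozen

lemma prod_eq_choose_mul_choose {m t N : ℕ} (h : t ≤ N) :
    ∏ k ∈ Finset.range t, ((m + k + 1 : K) * (N - k)) =
      (t.factorial * t.factorial) * ((m + t).choose t * N.choose t) := by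
  have hasc : ∏ k ∈ Finset.range t, (m + k + 1 : K) = t.factorial * (m + t).choose t := by
    rw [← Nat.cast_mul, ← Nat.ascFactorial_eq_factorial_mul_choose,
      Nat.ascFactorial_eq_prod_range, Nat.cast_prod]
    exact Finset.prod_congr rfl fun k _ => by push_cast; ring
  have hdesc : ∏ k ∈ Finset.range t, (N - k : K) = t.factorial * N.choose t := by
    rw [← Nat.cast_mul, ← Nat.descFactorial_eq_factorial_mul_choose,
      Nat.descFactorial_eq_prod_range, Nat.cast_prod]
    refine Finset.prod_congr rfl fun k hk => ?_
    rw [Nat.cast_sub ((Finset.mem_range.mp hk).le.trans h)]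
  rw [Finset.prod_mul_distrib, hasc, hdesc]
  ring

lemma exists_raise_pow_lower_pow_eq {a b i t : ℕ} (hba : b ≤ a) (hib : i ≤ b) (hti : t ≤ i)
    {z : ExteriorAlgebra K (V K n) ⊗[K] ExteriorAlgebra K (V K n)}
    (hz : z ∈ bidegree K n (a + t) (b - t)) :
    ∃ w ∈ bidegree K n ((a + i : ℕ) + 1) ((b - i : ℕ) - 1),
      (raise K n ^ i) ((lower K n ^ t) z) = lower K n w +
        ((t.factorial * t.factorial : K) * cCoef a b t i) • (raise K n ^ (i - t)) z := by
  obtain ⟨w, hw, h⟩ :=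
    (isSlTwoAction_raise_lower (K := K) (n := n) a b).raise_pow_lower_pow (r := t) hz (i - t) t
  refine ⟨w, ?_, ?_⟩
  · have hp : (a : ℤ) + (t + (i - t : ℕ) + 1) = (a + i : ℕ) + 1 := by omega
    have hq : (b : ℤ) - (t + (i - t : ℕ) + 1) = (b - i : ℕ) - 1 := by omega
    rwa [hp, hq] at hw
  · rw [Nat.sub_add_cancel hti] at h
    rw [h, cCoef]
    congr 2
    have hN : ((a - b + t + i : ℕ) : K) = (a - b) + 2 * ((t : ℤ) : K) + (i - t : ℕ) := by
      push_cast [hba, hti]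
      ring
    simp only [← hN]
    rw [prod_eq_choose_mul_choose (by omega), Nat.sub_add_cancel hti, Nat.cast_mul]

lemma ιMulti_mul_ι_eq_zero {s : ℕ} (v : Fin s → V K n) (i : Fin s) :
    ιMulti K s v * ι K (v i) = 0 := by
  have h := ιMulti_succ_last (Fin.snoc v (v i) : Fin (s + 1) → V K n)
  simp only [Fin.snoc_castSucc, Fin.snoc_last] at h
  rw [← h]
  exact (ιMulti K (s + 1)).map_eq_zero_of_eq _ (i := i.castSucc) (j := Fin.last s) (by simp)
    (Fin.castSucc_lt_last i).ne

lemma raise_ιMulti_tmul_ιMulti_eq_zero {p q : ℕ} (v : Fin p → V K n) (w : Fin q → V K n)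
    (h : Set.range w ⊆ Set.range v) : raise K n (ιMulti K p v ⊗ₜ ιMulti K q w) = 0 := by
  cases q with
  | zero => simp [raise_tmul]
  | succ q =>
    rw [raise_tmul_ιMulti]
    refine Finset.sum_eq_zero fun j _ => ?_
    obtain ⟨i, hi⟩ := h (Set.mem_range_self j)
    rw [← hi, ιMulti_mul_ι_eq_zero, TensorProduct.zero_tmul, smul_zero]

lemma exists_wedge_single_apply_eq_one [CharZero K] {p : ℕ} (hp : p ≤ n) :
    ∃ f : Lam K n p →ₗ[K] K, f (wedge K n fun i => Pi.single (Fin.castLE hp i) 1) = 1 := by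
  refine ⟨exteriorPower.pairingDual K (V K n) p
    (exteriorPower.ιMulti K p fun i => LinearMap.proj (Fin.castLE hp i)), ?_⟩
  refine (exteriorPower.pairingDual_ιMulti_ιMulti _ _).trans ?_
  convert Matrix.det_one (n := Fin p) (R := K)
  ext i j
  simp [Matrix.one_apply, Pi.single_apply, eq_comm]

lemma wedge_single_tmul_wedge_single_ne_zero [CharZero K] {p q : ℕ} (hp : p ≤ n) (hq : q ≤ n) :
    (wedge K n fun i => Pi.single (Fin.castLE hp i) 1) ⊗ₜ[K]
      (wedge K n fun i => Pi.single (Fin.castLE hq i) 1) ≠ 0 := by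
  obtain ⟨f, hf⟩ := exists_wedge_single_apply_eq_one (K := K) hp
  obtain ⟨g, hg⟩ := exists_wedge_single_apply_eq_one (K := K) hq
  intro h
  have := congrArg ((TensorProduct.lid K K).toLinearMap ∘ₗ TensorProduct.map f g) h
  simp [hf, hg] at this

lemma eq_zero_of_raise_lower_eq_zero {a b i : ℕ} [CharZero K] (hba : b ≤ a)
    {w : ExteriorAlgebra K (V K n) ⊗[K] ExteriorAlgebra K (V K n)}
    (hw : w ∈ bidegree K n ((a + i : ℕ) + 1) ((b - i : ℕ) - 1))
    (hib : i ≤ b) (h : raise K n (lower K n w) = 0) : w = 0 := by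
  have hs := isSlTwoAction_raise_lower (K := K) (n := n) a b
  have hw' : w ∈ bidegree K n (a + (i + 1 : ℤ)) (b - (i + 1 : ℤ)) := by
    have hp : (a : ℤ) + (i + 1) = (a + i : ℕ) + 1 := by omega
    have hq : (b : ℤ) - (i + 1) = (b - i : ℕ) - 1 := by omega
    rwa [hp, hq]
  refine hs.eq_zero_of_raise_lower_eq_zero (l := a - b + 2 * i + 1) (N := b) hw' h ?_ ?_
  · push_cast [hba]
    ring
  · have hmem := hs.raise_pow_mem hw' b
    have hq : (b : ℤ) - (i + 1 + b) = Int.negSucc i := by omega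
    have hbot : extPowZ K n (Int.negSucc i) = ⊥ := rfl
    simpa only [hq, bidegree, hbot, Submodule.map₂_bot_right, Submodule.mem_bot] using hmem

end Operators

/-- Lemma 3.2 of the paper: for `a ≥ b ≥ i ≥ t` and `μ = (a+i, b-i)`,
`π_μ ∘ δ_i ∘ Φ_t = c_t(a,b,i) · (π_μ ∘ δ_i)`; moreover if `n ≥ a+b` then `π_μ ∘ δ_i ≠ 0`. -/
theorem statement3 (K : Type) [Field K] [CharZero K] (n : ℕ) (a b i t : ℕ)
    (hba : b ≤ a) (hib : i ≤ b) (hti : t ≤ i)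
    (mf : ∀ p q : ℕ, Lam K n p ⊗[K] Lam K n q →ₗ[K] Lam K n (p+q))
    (Df : ∀ p q : ℕ, Lam K n (p+q) →ₗ[K] Lam K n p ⊗[K] Lam K n q)
    (hmf : ∀ p q, IsMulMap K n p q (mf p q))
    (hDf : ∀ p q, IsComulMap K n p q (Df p q)) :
    (schurProj K n mf Df (a+i) (b-i) ∘ₗ deltaMap K n mf Df a b i hib)
        ∘ₗ PhiMap K n mf Df a b t (by omega) (by omega) =
      (cCoef a b t i : K) •
        (schurProj K n mf Df (a+i) (b-i) ∘ₗ deltaMap K n mf Df a b i hib) ∧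
    (a + b ≤ n →
      schurProj K n mf Df (a+i) (b-i) ∘ₗ deltaMap K n mf Df a b i hib ≠ 0) := by
  have hfac : ∀ m : ℕ, (m.factorial : K) ≠ 0 := fun m => Nat.cast_ne_zero.mpr m.factorial_ne_zero
  have hs := isSlTwoAction_raise_lower (K := K) (n := n) a b
  constructor
  · refine LinearMap.ext fun z => ?_
    have hz := hs.raise_pow_mem (r := 0) (z := incl K n a b z) (by simpa using incl_mem a b z) t
    rw [zero_add] at hz
    obtain ⟨w, hw, h⟩ := exists_raise_pow_lower_pow_eq hba hib hti hz
    rw [← Module.End.mul_apply (raise K n ^ (i - t)), ← pow_add, Nat.sub_add_cancel hti,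
      ← factorial_sq_smul_incl_PhiMap hmf hDf (hti.trans (hib.trans hba)) (hti.trans hib),
      map_smul, ← factorial_smul_incl_deltaMap hmf hDf hib,
      ← factorial_smul_incl_deltaMap hmf hDf hib] at h
    set c : K := t.factorial * t.factorial * i.factorial with hc
    have hc0 : c ≠ 0 := mul_ne_zero (mul_ne_zero (hfac t) (hfac t)) (hfac i)
    simp only [LinearMap.comp_apply, LinearMap.smul_apply, schurProj, ← map_smul]
    rw [Submodule.mkQ_apply, Submodule.mkQ_apply, Submodule.Quotient.eq,
      mem_schurRel_iff hmf hDf]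
    refine ⟨c⁻¹ • w, Submodule.smul_mem _ _ hw, ?_⟩
    rw [map_smul, inv_smul_eq_iff₀ hc0, eq_sub_of_add_eq h.symm, map_sub]
    simp only [map_smul, smul_sub, smul_smul, hc]
    congr 2
    ring
  · intro hn h0
    have hp : a + i ≤ n := by omega
    have hq : b - i ≤ n := by omega
    set u := (wedge K n fun j : Fin (a + i) => Pi.single (Fin.castLE hp j) 1) ⊗ₜ[K]
      (wedge K n fun j : Fin (b - i) => Pi.single (Fin.castLE hq j) 1) with hu
    have hu0 : incl K n _ _ u ≠ 0 :=
      (map_ne_zero_iff _ (incl_injective _ _)).mpr (wedge_single_tmul_wedge_single_ne_zero hp hq)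
    have hEu : raise K n (incl K n _ _ u) = 0 := by
      refine raise_ιMulti_tmul_ιMulti_eq_zero _ _ ?_
      rintro _ ⟨j, rfl⟩
      exact ⟨⟨j, by omega⟩, rfl⟩
    have hmem : incl K n _ _ u ∈ bidegree K n (a + i) (b - i) := by
      have := incl_mem _ _ u
      push_cast [hib] at this
      exact this
    have hlow := hs.lower_pow_mem (r := i) hmem i
    simp only [sub_self, add_zero, sub_zero] at hlow
    rw [← range_incl] at hlow
    obtain ⟨z, hz⟩ := hlow
    obtain ⟨w, hw, h⟩ := exists_raise_pow_lower_pow_eq hba hib le_rfl hmem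
    have hδ : deltaMap K n mf Df a b i hib z ∈ schurRel K n mf Df (a + i) (b - i) :=
      (Submodule.Quotient.mk_eq_zero _).mp (LinearMap.congr_fun h0 z)
    obtain ⟨w', hw', h'⟩ := (mem_schurRel_iff hmf hDf _).mp hδ
    rw [← hz, ← factorial_smul_incl_deltaMap hmf hDf hib, ← h', Nat.sub_self, pow_zero,
      Module.End.one_apply] at h
    have hF : lower K n ((i.factorial : K) • w' - w) =
        ((i.factorial * i.factorial : K) * cCoef a b i i) • incl K n _ _ u := by
      rw [map_sub, map_smul, h, add_sub_cancel_left]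
    have hw0 := eq_zero_of_raise_lower_eq_zero hba
      (sub_mem (Submodule.smul_mem _ (i.factorial : K) hw') hw) hib
      (by rw [hF, map_smul, hEu, smul_zero])
    rw [hw0, map_zero, eq_comm, smul_eq_zero] at hF
    have hchoose : cCoef a b i i ≠ 0 := by
      rw [cCoef, Nat.choose_self, one_mul]
      exact (Nat.choose_pos (by omega)).ne'
    exact hF.elim (mul_ne_zero (mul_ne_zero (hfac i) (hfac i)) (Nat.cast_ne_zero.mpr hchoose)) hu0

end MMS
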